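/- Assume 0 < s̲ < s̄ < 1, E₀ ≠ ∅, and fix ε₀ > 0 such that C_{ε₀} ≠ ∅. For n ∈ ℕ, n ≥ 1, let F_n = {f ∈ F^∞ : the Lebesgue measure of S_f is at least 1/n}, where S_f = {c ∈ C_{ε₀} : there exists λ ∈ E₀ ∩ E_c with G_f(λ,0) = 0 and G_f(λ,c) = 0}. Then F_n is nowhere dense in F^∞ with the sup-norm metric. -/

import Mathlib

/-!
Write `Φ_f(x) = ∫_{slo}^x f(s)(1-2s)/s ds`, so that `G_f = p Φ_f(m) - (1-p) Φ_f(mm)` for a signal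
`f`.  A shock `c` is stationary when `G_f(λ,0)` and `G_f(λ,c)` vanish at a common `λ`: two equations
in the single unknown `λ`, so generically the stationary set should be null.

Outside a finite set of exceptional shocks (`excShocks`) the four cutoffs `m(λ,0)`, `mm(λ,0)`,
`m(λ,c)`, `mm(λ,c)` are pairwise distinct for every `λ`, and in each of the two pairs at least one
cutoff is interior; this is where `u ≠ v` and `E₀ ≠ ∅` enter.  For a smooth bump `R`, the direction
`ψ(s) = s R''(s)` has both moments equal to zero and `Φ_ψ = (1-2s)R' + 2R` (`exists_direction`), so
near any admissible pair `(λ,c)` there are directions shifting `G(λ,0)` and `G(λ,c)` independently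
by nonzero constants (`exists_shift`).  Mixing in a strictly positive signal (`exists_pos_signal`)
keeps such perturbations nonnegative.  For a fixed `c` the parameters `(t₁,t₂)` of the perturbation
that make `c` stationary lie on a Lipschitz curve in the plane, hence form a null set, and by Fubini
arbitrarily small parameters make the stationary set near the pair null (`exists_null_parameter`,
`local_dense`).

Over a compact set of pairs a null stationary set has small measure also for all nearby signals
(`robust_of_null`).  The resulting property `DenseRobust` passes to subsets and finite unions, so
compactness extends it from neighbourhoods to all admissible pairs whose shock avoids a small open
neighbourhood of the exceptional shocks.  That neighbourhood has measure less than `1/(2n)`.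
-/

open Set MeasureTheory
open scoped ENNReal

noncomputable section

/-- Cutoff of the match type: m(λ,c). -/
def mcut (u lam c : ℝ) : ℝ := lam * (1 + c) / (lam * (1 + c) + (u - c))

/-- Cutoff of the mismatch type: mm(λ,c). -/
def mmcut (v lam c : ℝ) : ℝ := lam * (1 - c) / (lam * (1 - c) + (v + c))

/-- Confounding region E_c. -/
def Econf (u v slo shi c : ℝ) : Set ℝ :=
  {lam : ℝ | 0 < lam ∧ mcut u lam c ∈ Ioo slo shi ∧ mmcut v lam c ∈ Ioo slo shi}

/-- The signal class F^∞ on (slo, shi). -/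
def Fclass (slo shi : ℝ) : Set (ℝ → ℝ) :=
  {f : ℝ → ℝ | ContinuousOn f (Ioo slo shi)
    ∧ (∀ s ∈ Ioo slo shi, 0 ≤ f s)
    ∧ (∫ s in slo..shi, f s) = 1
    ∧ (∫ s in slo..shi, f s * (1 - 2 * s) / s) = 0
    ∧ (∃ M : ℝ, ∀ s ∈ Ioo slo shi, |f s| ≤ M)
    ∧ (∃ M : ℝ, ∀ s ∈ Ioo slo shi, |f s * (1 - s) / s| ≤ M)}

/-- G_f(λ,c). -/
def Gfun (p u v slo shi : ℝ) (f : ℝ → ℝ) (lam c : ℝ) : ℝ :=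
  p * (∫ s in slo..(mcut u lam c), f s * (1 - 2 * s) / s)
  + (1 - p) * (∫ s in (mmcut v lam c)..shi, f s * (1 - 2 * s) / s)

/-- The shock set C. -/
def Cshock (u v slo shi : ℝ) : Set ℝ :=
  {c : ℝ | c ≠ 0 ∧ (Econf u v slo shi c).Nonempty}

/-- The meaningful shock set C_{ε₀}. -/
def Ceps (u v slo shi e0 : ℝ) : Set ℝ :=
  Cshock u v slo shi ∩ Ioo (-1 + e0) (u - e0) ∩ Ioo (-v + e0) (1 - e0)

/-- The sup-norm (L∞) distance between two signals on (slo, shi). -/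
def supDist (slo shi : ℝ) (f g : ℝ → ℝ) : ℝ :=
  ⨆ s : Ioo slo shi, |f s.1 - g s.1|

/-- `A` is nowhere dense in F^∞ w.r.t. the sup-norm metric: inside every ball of F^∞
there is a smaller ball of F^∞ disjoint from `A`. -/
def NowhereDenseIn (slo shi : ℝ) (A : Set (ℝ → ℝ)) : Prop :=
  ∀ f ∈ Fclass slo shi, ∀ ε > (0:ℝ), ∃ g ∈ Fclass slo shi,
    supDist slo shi f g < ε ∧ ∃ δ > (0:ℝ), ∀ h ∈ A, ¬ supDist slo shi g h < δ

/-- `A` is meagre (of first category) in F^∞ w.r.t. the sup-norm metric. -/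
def MeagreIn (slo shi : ℝ) (A : Set (ℝ → ℝ)) : Prop :=
  ∃ B : ℕ → Set (ℝ → ℝ), (∀ n, NowhereDenseIn slo shi (B n)) ∧ A ⊆ ⋃ n, B n

/-- `f` lies in the closure of `A` inside F^∞ w.r.t. the sup-norm metric. -/
def InClosureIn (slo shi : ℝ) (A : Set (ℝ → ℝ)) (f : ℝ → ℝ) : Prop :=
  ∀ ε > (0:ℝ), ∃ g ∈ A, supDist slo shi f g < ε

/-- The stationary set S_f of a signal f. -/
def statSet (p u v slo shi e0 : ℝ) (f : ℝ → ℝ) : Set ℝ :=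
  {c ∈ Ceps u v slo shi e0 | ∃ lam ∈ Econf u v slo shi 0 ∩ Econf u v slo shi c,
     Gfun p u v slo shi f lam 0 = 0 ∧ Gfun p u v slo shi f lam c = 0}

/-- F_n : signals whose stationary set has Lebesgue measure at least 1/n. -/
def Fn (p u v slo shi e0 : ℝ) (n : ℕ) : Set (ℝ → ℝ) :=
  {f ∈ Fclass slo shi | (1 : ℝ≥0∞) / n ≤ volume (statSet p u v slo shi e0 f)}

/-- M_λ : shocks in C_{ε₀} whose cutoffs at λ lie in [slo, shi]. -/
def Mset (u v slo shi e0 lam : ℝ) : Set ℝ :=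
  {c ∈ Ceps u v slo shi e0 | mcut u lam c ∈ Icc slo shi ∧ mmcut v lam c ∈ Icc slo shi}

/-- λ̲. -/
def lamLo (u v slo shi e0 : ℝ) : ℝ :=
  min ((u - sSup (Ceps u v slo shi e0)) / (1 + sSup (Ceps u v slo shi e0)))
      ((v + sInf (Ceps u v slo shi e0)) / (1 - sInf (Ceps u v slo shi e0)))

/-- λ̄. -/
def lamHi (u v slo shi e0 : ℝ) : ℝ :=
  max ((u - sInf (Ceps u v slo shi e0)) / (1 + sInf (Ceps u v slo shi e0)))
      ((v + sSup (Ceps u v slo shi e0)) / (1 - sSup (Ceps u v slo shi e0)))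

/-! ### Bounded continuous functions and the primitive -/

/-- Bounded continuous functions on `(slo, shi)`: the ambient linear space of `Fclass`. -/
def BddCont (slo shi : ℝ) (f : ℝ → ℝ) : Prop :=
  ContinuousOn f (Ioo slo shi) ∧ ∃ M : ℝ, ∀ s ∈ Ioo slo shi, |f s| ≤ M

/-- The primitive `Φ_f(x) = ∫_{slo}^x f(s)(1-2s)/s ds`. -/
def Phi (slo : ℝ) (f : ℝ → ℝ) (x : ℝ) : ℝ := ∫ s in slo..x, f s * (1 - 2 * s) / s

lemma BddCont.intervalIntegrable {slo shi : ℝ} {f : ℝ → ℝ} (hss : slo < shi)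
    (hf : BddCont slo shi f) : IntervalIntegrable f volume slo shi := by
  obtain ⟨hc, M, hM⟩ := hf
  rw [intervalIntegrable_iff_integrableOn_Ioo_of_le hss.le]
  have : IsFiniteMeasure (volume.restrict (Ioo slo shi)) := by
    constructor; simp
  refine Integrable.of_bound (hc.aestronglyMeasurable measurableSet_Ioo) M ?_
  filter_upwards [ae_restrict_mem measurableSet_Ioo] with s hs
  exact hM s hs

lemma abs_weight_le {slo shi : ℝ} (hslo : 0 < slo) (hshi : shi < 1) {s : ℝ}
    (hs : s ∈ Ioo slo shi) {y M : ℝ} (hy : |y| ≤ M) : |y * (1 - 2 * s) / s| ≤ M / slo := by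
  have h0 : 0 < s := hslo.trans hs.1
  have h1 : s < 1 := hs.2.trans hshi
  rw [abs_div, abs_mul, abs_of_pos h0]
  have h2 : |1 - 2 * s| ≤ 1 := abs_le.2 ⟨by linarith, by linarith⟩
  have hM : 0 ≤ M := (abs_nonneg y).trans hy
  calc |y| * |1 - 2 * s| / s ≤ M * 1 / slo := by
        gcongr
        exact hs.1.le
    _ = M / slo := by ring

lemma BddCont.weight {slo shi : ℝ} {f : ℝ → ℝ} (hslo : 0 < slo) (hshi : shi < 1)
    (hf : BddCont slo shi f) : BddCont slo shi (fun s => f s * (1 - 2 * s) / s) := by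
  obtain ⟨hc, M, hM⟩ := hf
  refine ⟨?_, M / slo, fun s hs => abs_weight_le hslo hshi hs (hM s hs)⟩
  refine ContinuousOn.div (hc.mul (by fun_prop)) continuousOn_id ?_
  intro s hs
  exact (hslo.trans hs.1).ne'

lemma BddCont.add {slo shi : ℝ} {f g : ℝ → ℝ} (hf : BddCont slo shi f) (hg : BddCont slo shi g) :
    BddCont slo shi (fun s => f s + g s) := by
  obtain ⟨hc, M, hM⟩ := hf
  obtain ⟨hd, N, hN⟩ := hg
  exact ⟨hc.add hd, M + N, fun s hs => (abs_add_le _ _).trans (add_le_add (hM s hs) (hN s hs))⟩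

lemma BddCont.smul {slo shi : ℝ} {f : ℝ → ℝ} (t : ℝ) (hf : BddCont slo shi f) :
    BddCont slo shi (fun s => t * f s) := by
  obtain ⟨hc, M, hM⟩ := hf
  refine ⟨continuousOn_const.mul hc, |t| * M, fun s hs => ?_⟩
  rw [abs_mul]
  exact mul_le_mul_of_nonneg_left (hM s hs) (abs_nonneg t)

lemma bddCont_of_mem {slo shi : ℝ} {f : ℝ → ℝ} (hf : f ∈ Fclass slo shi) : BddCont slo shi f :=
  ⟨hf.1, hf.2.2.2.2.1⟩

/-- On a strongly bounded signal interval the last boundedness clause of `Fclass` is automatic. -/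
lemma mem_Fclass_of {slo shi : ℝ} {f : ℝ → ℝ} (hslo : 0 < slo) (hshi : shi < 1)
    (hf : BddCont slo shi f) (h0 : ∀ s ∈ Ioo slo shi, 0 ≤ f s)
    (h1 : (∫ s in slo..shi, f s) = 1) (h2 : Phi slo f shi = 0) : f ∈ Fclass slo shi := by
  refine ⟨hf.1, h0, h1, h2, hf.2, ?_⟩
  obtain ⟨M, hM⟩ := hf.2
  refine ⟨M / slo, fun s hs => ?_⟩
  have hs0 : 0 < s := hslo.trans hs.1
  have hs1 : s < 1 := hs.2.trans hshi
  have h3 : |1 - s| ≤ 1 := abs_le.2 ⟨by linarith, by linarith⟩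
  have hM0 : 0 ≤ M := (abs_nonneg _).trans (hM s hs)
  rw [abs_div, abs_mul, abs_of_pos hs0]
  calc |f s| * |1 - s| / s ≤ M * 1 / slo := by
        gcongr
        · exact hM s hs
        · exact hs.1.le
    _ = M / slo := by ring

lemma intervalIntegrable_weight_Icc {slo shi : ℝ} {f : ℝ → ℝ} (hslo : 0 < slo) (hss : slo < shi)
    (hshi : shi < 1) (hf : BddCont slo shi f) {x y : ℝ} (hx : x ∈ Icc slo shi)
    (hy : y ∈ Icc slo shi) :
    IntervalIntegrable (fun s => f s * (1 - 2 * s) / s) volume x y := by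
  refine ((hf.weight hslo hshi).intervalIntegrable hss).mono_set ?_
  rw [uIcc_of_le hss.le]
  exact uIcc_subset_Icc hx hy

lemma Phi_sub {slo shi : ℝ} {f : ℝ → ℝ} (hslo : 0 < slo) (hss : slo < shi)
    (hshi : shi < 1) (hf : BddCont slo shi f) {x y : ℝ} (hx : x ∈ Icc slo shi)
    (hy : y ∈ Icc slo shi) :
    Phi slo f y - Phi slo f x = ∫ s in x..y, f s * (1 - 2 * s) / s := by
  have hl : slo ∈ Icc slo shi := ⟨le_rfl, hss.le⟩
  have := intervalIntegral.integral_add_adjacent_intervals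
    (intervalIntegrable_weight_Icc hslo hss hshi hf hl hx)
    (intervalIntegrable_weight_Icc hslo hss hshi hf hx hy)
  unfold Phi
  linarith

lemma Phi_lip {slo shi : ℝ} {f : ℝ → ℝ} (hslo : 0 < slo) (hss : slo < shi)
    (hshi : shi < 1) (hf : BddCont slo shi f) {M : ℝ} (hM : ∀ s ∈ Ioo slo shi, |f s| ≤ M)
    {x y : ℝ} (hx : x ∈ Icc slo shi) (hy : y ∈ Icc slo shi) :
    |Phi slo f y - Phi slo f x| ≤ M / slo * |y - x| := by
  rw [Phi_sub hslo hss hshi hf hx hy, ← Real.norm_eq_abs]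
  refine intervalIntegral.norm_integral_le_of_norm_le_const_ae ?_
  -- the value at the endpoint `shi` is unconstrained, so that point is discarded
  have h : ∀ᵐ s : ℝ, s ≠ shi := by simp [ae_iff]
  filter_upwards [h] with s hs hsm
  have h1 := uIoc_subset_uIcc hsm
  rw [Real.norm_eq_abs]
  refine abs_weight_le hslo hshi ?_ (hM s ?_) <;>
  · rcases mem_uIoc.1 hsm with h2 | h2
    · exact ⟨hx.1.trans_lt h2.1, lt_of_le_of_ne (h2.2.trans hy.2) hs⟩
    · exact ⟨hy.1.trans_lt h2.1, lt_of_le_of_ne (h2.2.trans hx.2) hs⟩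

lemma Phi_continuousOn {slo shi : ℝ} {f : ℝ → ℝ} (hslo : 0 < slo) (hss : slo < shi)
    (hshi : shi < 1) (hf : BddCont slo shi f) : ContinuousOn (Phi slo f) (Icc slo shi) := by
  obtain ⟨M, hM⟩ := hf.2
  have h : LipschitzOnWith (Real.toNNReal (M / slo)) (Phi slo f) (Icc slo shi) := by
    refine LipschitzOnWith.of_dist_le_mul fun x hx y hy => ?_
    rw [Real.dist_eq, Real.dist_eq]
    refine (Phi_lip hslo hss hshi hf hM hy hx).trans ?_
    gcongr
    exact Real.le_coe_toNNReal _
  exact h.continuousOn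

lemma Phi_add_smul {slo shi : ℝ} {f g : ℝ → ℝ} (hslo : 0 < slo) (hss : slo < shi)
    (hshi : shi < 1) (hf : BddCont slo shi f) (hg : BddCont slo shi g) (t : ℝ)
    {x : ℝ} (hx : x ∈ Icc slo shi) :
    Phi slo (fun s => f s + t * g s) x = Phi slo f x + t * Phi slo g x := by
  have hl : slo ∈ Icc slo shi := ⟨le_rfl, hss.le⟩
  unfold Phi
  rw [← intervalIntegral.integral_const_mul, ← intervalIntegral.integral_add
    (intervalIntegrable_weight_Icc hslo hss hshi hf hl hx)
    ((intervalIntegrable_weight_Icc hslo hss hshi hg hl hx).const_mul t)]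
  congr 1
  funext s
  ring

lemma Gfun_eq {p u v slo shi : ℝ} {f : ℝ → ℝ} (hslo : 0 < slo) (hss : slo < shi)
    (hshi : shi < 1) (hf : BddCont slo shi f) (h0 : Phi slo f shi = 0) {lam c : ℝ}
    (hmm : mmcut v lam c ∈ Icc slo shi) :
    Gfun p u v slo shi f lam c =
      p * Phi slo f (mcut u lam c) - (1 - p) * Phi slo f (mmcut v lam c) := by
  have := Phi_sub hslo hss hshi hf hmm (show shi ∈ Icc slo shi from ⟨hss.le, le_rfl⟩)
  unfold Gfun
  rw [← this, h0]
  unfold Phi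
  ring

/-! ### The sup distance -/

lemma abs_sub_le_supDist {slo shi : ℝ} {f g : ℝ → ℝ} (hf : BddCont slo shi f)
    (hg : BddCont slo shi g) {s : ℝ} (hs : s ∈ Ioo slo shi) :
    |f s - g s| ≤ supDist slo shi f g := by
  obtain ⟨M, hM⟩ := hf.2
  obtain ⟨N, hN⟩ := hg.2
  have hb : BddAbove (range fun s : Ioo slo shi => |f s.1 - g s.1|) := by
    refine ⟨M + N, ?_⟩
    rintro _ ⟨s, rfl⟩
    exact (abs_sub _ _).trans (add_le_add (hM s.1 s.2) (hN s.1 s.2))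
  exact le_ciSup hb ⟨s, hs⟩

lemma supDist_le {slo shi : ℝ} {f g : ℝ → ℝ} (hss : slo < shi) {B : ℝ}
    (h : ∀ s ∈ Ioo slo shi, |f s - g s| ≤ B) : supDist slo shi f g ≤ B := by
  have : Nonempty (Ioo slo shi) := (nonempty_Ioo.2 hss).to_subtype
  exact ciSup_le fun s => h s.1 s.2

lemma supDist_triangle {slo shi : ℝ} {f g h : ℝ → ℝ} (hss : slo < shi) (hf : BddCont slo shi f)
    (hg : BddCont slo shi g) (hh : BddCont slo shi h) :
    supDist slo shi f h ≤ supDist slo shi f g + supDist slo shi g h :=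
  supDist_le hss fun s hs => (abs_sub_le _ (g s) _).trans
    (add_le_add (abs_sub_le_supDist hf hg hs) (abs_sub_le_supDist hg hh hs))

lemma Phi_close {slo shi : ℝ} {f g : ℝ → ℝ} (hslo : 0 < slo) (hss : slo < shi)
    (hshi : shi < 1) (hf : BddCont slo shi f) (hg : BddCont slo shi g) {d : ℝ}
    (hd : supDist slo shi f g ≤ d) {x : ℝ} (hx : x ∈ Icc slo shi) :
    |Phi slo f x - Phi slo g x| ≤ d / slo := by
  have hl : slo ∈ Icc slo shi := ⟨le_rfl, hss.le⟩
  have hB : ∀ s ∈ Ioo slo shi, |f s + (-1) * g s| ≤ d := fun s hs => by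
    have := (abs_sub_le_supDist hf hg hs).trans hd
    rwa [neg_one_mul, ← sub_eq_add_neg]
  have h1 := Phi_lip hslo hss hshi (hf.add (hg.smul (-1))) hB hl hx
  rw [Phi_add_smul hslo hss hshi hf hg (-1) hx, Phi_add_smul hslo hss hshi hf hg (-1) hl] at h1
  have h2 : ∀ k : ℝ → ℝ, Phi slo k slo = 0 := fun k => by simp [Phi]
  rw [h2, h2] at h1
  have hd0 : 0 ≤ d := by
    obtain ⟨s, hs⟩ := nonempty_Ioo.2 hss
    exact (abs_nonneg _).trans (hB s hs)
  have h3 : |x - slo| ≤ 1 := abs_le.2 ⟨by linarith [hx.1], by linarith [hx.2]⟩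
  have h4 : d / slo * |x - slo| ≤ d / slo * 1 := by gcongr
  calc |Phi slo f x - Phi slo g x|
      = |Phi slo f x + -1 * Phi slo g x - (0 + -1 * 0)| := by congr 1; ring
    _ ≤ d / slo := by linarith

lemma Gfun_close {p u v slo shi : ℝ} (hp : p ∈ Ioo (0:ℝ) 1) {f g : ℝ → ℝ} (hslo : 0 < slo)
    (hss : slo < shi) (hshi : shi < 1) (hf : f ∈ Fclass slo shi) (hg : g ∈ Fclass slo shi) {d : ℝ}
    (hd : supDist slo shi f g ≤ d) {lam c : ℝ} (hm : mcut u lam c ∈ Icc slo shi)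
    (hmm : mmcut v lam c ∈ Icc slo shi) :
    |Gfun p u v slo shi f lam c - Gfun p u v slo shi g lam c| ≤ d / slo := by
  have bf := bddCont_of_mem hf
  have bg := bddCont_of_mem hg
  rw [Gfun_eq hslo hss hshi bf hf.2.2.2.1 hmm, Gfun_eq hslo hss hshi bg hg.2.2.2.1 hmm]
  have h1 := abs_le.1 (Phi_close hslo hss hshi bf bg hd hm)
  have h2 := abs_le.1 (Phi_close hslo hss hshi bf bg hd hmm)
  have := hp.1
  have := hp.2
  rw [abs_le]
  constructor <;> nlinarith

/-! ### A strictly positive signal -/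

lemma half_mem {slo shi : ℝ} {f : ℝ → ℝ} (hslo : 0 < slo) (hss : slo < shi) (hshi : shi < 1)
    (hf : f ∈ Fclass slo shi) : (1 / 2 : ℝ) ∈ Ioo slo shi := by
  have bf := bddCont_of_mem hf
  obtain ⟨-, hnn, hint, hint2, -, -⟩ := hf
  have hi := (bf.weight hslo hshi).intervalIntegrable hss
  have hmem : ∀ᵐ s ∂(volume.restrict (Ioc slo shi ∪ Ioc shi slo)), s ∈ Ioo slo shi := by
    rw [Ioc_eq_empty (not_lt.2 hss.le), union_empty, ← restrict_Ioo_eq_restrict_Ioc]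
    exact ae_restrict_mem measurableSet_Ioo
  -- a weight of constant sign would force `f` to vanish almost everywhere
  have key : (∀ s ∈ Ioo slo shi, (1 - 2 * s ≠ 0)) →
      (fun s => f s * (1 - 2 * s) / s) =ᵐ[volume.restrict (Ioc slo shi ∪ Ioc shi slo)] 0 →
      False := by
    intro hne hz
    have h1 : f =ᵐ[volume.restrict (Ioc slo shi ∪ Ioc shi slo)] 0 := by
      filter_upwards [hz, hmem] with s hs hs2
      have h3 : s ≠ 0 := (hslo.trans hs2.1).ne'
      have := hne s hs2
      simp only [Pi.zero_apply, div_eq_zero_iff, mul_eq_zero] at hs ⊢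
      tauto
    have h2 := (intervalIntegral.integral_eq_zero_iff_of_nonneg_ae (h1.symm.le)
      (bf.intervalIntegrable hss)).2 h1
    rw [h2] at hint
    exact zero_ne_one hint
  constructor
  · by_contra hcon
    rw [not_lt] at hcon
    refine key (fun s hs => by linarith [hs.1]) ?_
    have hneg : (∫ s in slo..shi, -(f s * (1 - 2 * s) / s)) = 0 := by
      rw [intervalIntegral.integral_neg, hint2, neg_zero]
    have h := (intervalIntegral.integral_eq_zero_iff_of_nonneg_ae ?_ hi.neg).1 hneg
    · filter_upwards [h] with s hs
      simpa using hs
    · filter_upwards [hmem] with s hs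
      have h0 : 0 < s := hslo.trans hs.1
      have h1 := hnn s hs
      have h2 : f s * (1 - 2 * s) / s ≤ 0 := by
        apply div_nonpos_of_nonpos_of_nonneg _ h0.le
        exact mul_nonpos_of_nonneg_of_nonpos h1 (by linarith [hs.1])
      simpa using h2
  · by_contra hcon
    rw [not_lt] at hcon
    refine key (fun s hs => by linarith [hs.2]) ?_
    refine (intervalIntegral.integral_eq_zero_iff_of_nonneg_ae ?_ hi).1 hint2
    filter_upwards [hmem] with s hs
    have h0 : 0 < s := hslo.trans hs.1
    exact div_nonneg (mul_nonneg (hnn s hs) (by linarith [hs.2])) h0.le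

/-- If `1/2` is interior, `Fclass` contains a signal bounded away from zero: tilting the function
`s` on one side of `1/2` balances the integral of `(1-2s)/s` against it. -/
lemma exists_pos_signal {slo shi : ℝ} (hslo : 0 < slo) (hss : slo < shi) (hshi : shi < 1)
    (hhalf : (1 / 2 : ℝ) ∈ Ioo slo shi) :
    ∃ w ∈ Fclass slo shi, ∃ κ > 0, ∀ s ∈ Ioo slo shi, κ ≤ w s := by
  set J0 := ∫ s in slo..shi, (1 - 2 * s) with hJ0
  set J1 := ∫ s in slo..shi, (1 - 2 * s) * max 0 (1 / 2 - s) with hJ1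
  set J2 := ∫ s in slo..shi, (2 * s - 1) * max 0 (s - 1 / 2) with hJ2
  have p1 : 0 < J1 := by
    refine intervalIntegral.integral_pos hss (by fun_prop) ?_ ⟨slo, ⟨le_rfl, hss.le⟩, ?_⟩
    · intro s _
      rcases le_total (1 / 2 - s) 0 with h | h
      · rw [max_eq_left h, mul_zero]
      · rw [max_eq_right h]; nlinarith
    · have := hhalf.1
      rw [max_eq_right (by linarith)]; nlinarith
  have p2 : 0 < J2 := by
    refine intervalIntegral.integral_pos hss (by fun_prop) ?_ ⟨shi, ⟨hss.le, le_rfl⟩, ?_⟩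
    · intro s _
      rcases le_total (s - 1 / 2) 0 with h | h
      · rw [max_eq_left h, mul_zero]
      · rw [max_eq_right h]; nlinarith
    · have := hhalf.2
      rw [max_eq_right (by linarith)]; nlinarith
  obtain ⟨K1, K2, hK1, hK2, hK⟩ : ∃ K1 K2 : ℝ, 0 ≤ K1 ∧ 0 ≤ K2 ∧ J0 + K1 * J1 - K2 * J2 = 0 := by
    rcases le_total J0 0 with h | h
    · exact ⟨-J0 / J1, 0, div_nonneg (by linarith) p1.le, le_rfl, by field_simp; ring⟩
    · exact ⟨0, J0 / J2, le_rfl, div_nonneg h p2.le, by field_simp; ring⟩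
  set r : ℝ → ℝ := fun s => 1 + K1 * max 0 (1 / 2 - s) + K2 * max 0 (s - 1 / 2) with hr
  have rc : Continuous r := by fun_prop
  have r1 : ∀ s, 1 ≤ r s := fun s => by
    have h1 : 0 ≤ K1 * max 0 (1 / 2 - s) := mul_nonneg hK1 (le_max_left _ _)
    have h2 : 0 ≤ K2 * max 0 (s - 1 / 2) := mul_nonneg hK2 (le_max_left _ _)
    simp only [hr]; linarith
  set A := ∫ s in slo..shi, s * r s with hA
  have hApos : 0 < A := by
    refine intervalIntegral.integral_pos hss (by fun_prop) ?_ ⟨slo, ⟨le_rfl, hss.le⟩, ?_⟩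
    · intro s hs
      exact mul_nonneg (hslo.trans hs.1).le (zero_le_one.trans (r1 s))
    · exact mul_pos hslo (zero_lt_one.trans_le (r1 slo))
  have hB : ∫ s in slo..shi, (1 - 2 * s) * r s = 0 := by
    rw [← hK, hJ0, hJ1, hJ2, ← intervalIntegral.integral_const_mul,
      ← intervalIntegral.integral_const_mul, ← intervalIntegral.integral_add,
      ← intervalIntegral.integral_sub]
    · congr 1; funext s; simp only [hr]; ring
    all_goals exact Continuous.intervalIntegrable (by fun_prop) _ _
  have hcont : Continuous fun s => A⁻¹ * (s * r s) := by fun_prop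
  refine ⟨fun s => A⁻¹ * (s * r s), mem_Fclass_of hslo hshi ⟨hcont.continuousOn, ?_⟩ ?_ ?_ ?_,
    A⁻¹ * (slo * 1), by positivity, ?_⟩
  · obtain ⟨M, hM⟩ := isCompact_Icc.exists_bound_of_continuousOn (s := Icc slo shi)
      hcont.continuousOn
    exact ⟨M, fun s hs => hM s (Ioo_subset_Icc_self hs)⟩
  · intro s hs
    have h0 : 0 < s := hslo.trans hs.1
    have h1 := r1 s
    positivity
  · rw [intervalIntegral.integral_const_mul, ← hA, inv_mul_cancel₀ hApos.ne']
  · have : Phi slo (fun s => A⁻¹ * (s * r s)) shi = A⁻¹ * ∫ s in slo..shi, (1 - 2 * s) * r s := by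
      unfold Phi
      rw [← intervalIntegral.integral_const_mul]
      refine intervalIntegral.integral_congr fun s hs => ?_
      rw [uIcc_of_le hss.le] at hs
      have h0 : s ≠ 0 := (hslo.trans_le hs.1).ne'
      simp only
      field_simp
    rw [this, hB, mul_zero]
  · intro s hs
    have h1 := r1 s
    have h2 := hs.1.le
    exact mul_le_mul_of_nonneg_left (mul_le_mul h2 h1 zero_le_one (hslo.le.trans h2))
      (inv_pos.2 hApos).le

/-! ### Localized perturbation directions -/

/-- For a bump `R` around `x`, the direction `ψ(s) = s R''(s)` has both moments zero and primitive
`Φ_ψ = (1-2s) R' + 2R`, which equals `2` near `x` and vanishes near the points of a prescribed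
finite set not containing `x`. -/
lemma exists_direction {slo shi x : ℝ} (hx : x ∈ Ioo slo shi) (F : Set ℝ) (hF : F.Finite)
    (hxF : x ∉ F) :
    ∃ ψ : ℝ → ℝ, Continuous ψ ∧ (∫ s in slo..shi, ψ s) = 0 ∧ Phi slo ψ shi = 0 ∧
      (∀ᶠ y in nhds x, Phi slo ψ y = 2) ∧ ∀ z ∈ F, ∀ᶠ y in nhds z, Phi slo ψ y = 0 := by
  set F' : Set ℝ := F ∪ {slo, shi} with hF'
  have hF'fin : F'.Finite := hF.union (by simp)
  have hxF' : x ∉ F' := by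
    rintro (h | h | h)
    · exact hxF h
    · exact hx.1.ne' h
    · exact hx.2.ne h
  obtain ⟨ρ, hρ, hball⟩ := Metric.isOpen_iff.1 hF'fin.isClosed.isOpen_compl x hxF'
  let R : ContDiffBump x := ⟨ρ / 3, ρ / 2, by positivity, by linarith⟩
  have hR : ContDiff ℝ 2 R := R.contDiff (n := 2)
  have hR1 : ContDiff ℝ 1 (deriv R) := by
    have : ContDiff ℝ (1 + 1) R := by simpa [one_add_one_eq_two] using hR
    exact (contDiff_succ_iff_deriv.1 this).2.2
  have hR2 : Continuous (deriv (deriv R)) := hR1.continuous_deriv le_rfl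
  have d0 : ∀ s, HasDerivAt R (deriv R s) s := fun s =>
    (hR.differentiable (by norm_num) s).hasDerivAt
  have d1 : ∀ s, HasDerivAt (deriv R) (deriv (deriv R) s) s := fun s =>
    (hR1.differentiable (by norm_num) s).hasDerivAt
  have hfar : ∀ z, ρ / 2 < dist z x → ∀ᶠ y in nhds z, R y = 0 := fun z hz => by
    have : ∀ᶠ y in nhds z, ρ / 2 < dist y x :=
      (continuous_id.dist continuous_const).continuousAt.eventually (lt_mem_nhds hz)
    filter_upwards [this] with y hy
    exact R.zero_of_le_dist hy.le
  have hfar1 : ∀ z, ρ / 2 < dist z x → ∀ᶠ y in nhds z, R y = 0 ∧ deriv R y = 0 := fun z hz => by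
    filter_upwards [(hfar z hz).eventually_nhds] with y hy
    refine ⟨hy.self_of_nhds, ?_⟩
    have : (R : ℝ → ℝ) =ᶠ[nhds y] fun _ => 0 := hy
    rw [this.deriv_eq]; simp
  have hnear : ∀ᶠ y in nhds x, R y = 1 ∧ deriv R y = 0 := by
    have h : ∀ᶠ y in nhds x, R y = 1 := R.eventuallyEq_one
    filter_upwards [h.eventually_nhds] with y hy
    refine ⟨hy.self_of_nhds, ?_⟩
    have : (R : ℝ → ℝ) =ᶠ[nhds y] fun _ => 1 := hy
    rw [this.deriv_eq]; simp
  have hdist : ∀ z ∈ F', ρ / 2 < dist z x := fun z hz => by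
    by_contra hcon
    exact hball (show z ∈ Metric.ball x ρ by rw [Metric.mem_ball]; linarith) hz
  have hslo := (hfar1 slo (hdist slo (by simp [hF']))).self_of_nhds
  have hshi := (hfar1 shi (hdist shi (by simp [hF']))).self_of_nhds
  have hPhi : ∀ y, Phi slo (fun s => s * deriv (deriv R) s) y =
      (1 - 2 * y) * deriv R y + 2 * R y := by
    intro y
    have hd : ∀ s ∈ uIcc slo y, HasDerivAt (fun s => (1 - 2 * s) * deriv R s + 2 * R s)
        ((1 - 2 * s) * deriv (deriv R) s) s := fun s _ => by
      have h1 : HasDerivAt (fun s : ℝ => 1 - 2 * s) (-2) s := by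
        simpa using ((hasDerivAt_id s).const_mul 2).const_sub 1
      exact ((h1.mul (d1 s)).add ((d0 s).const_mul 2)).congr_deriv (by ring)
    have h2 := intervalIntegral.integral_eq_sub_of_hasDerivAt hd
      (Continuous.intervalIntegrable (by fun_prop) _ _)
    rw [hslo.1, hslo.2] at h2
    have h3 : Phi slo (fun s => s * deriv (deriv R) s) y
        = ∫ s in slo..y, (1 - 2 * s) * deriv (deriv R) s := by
      unfold Phi
      refine intervalIntegral.integral_congr_ae ?_
      have h : ∀ᵐ s : ℝ, s ≠ 0 := by simp [ae_iff]
      filter_upwards [h] with s hs _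
      field_simp
    rw [h3, h2]; ring
  refine ⟨fun s => s * deriv (deriv R) s, by fun_prop, ?_, ?_, ?_, ?_⟩
  · have hd : ∀ s ∈ uIcc slo shi, HasDerivAt (fun s => s * deriv R s - R s)
        (s * deriv (deriv R) s) s := fun s _ => by
      exact (((hasDerivAt_id' s).mul (d1 s)).sub (d0 s)).congr_deriv (by ring)
    rw [intervalIntegral.integral_eq_sub_of_hasDerivAt hd
      (Continuous.intervalIntegrable (by fun_prop) _ _), hslo.1, hslo.2, hshi.1, hshi.2]
    ring
  · rw [hPhi, hshi.1, hshi.2]; ring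
  · filter_upwards [hnear] with y hy
    rw [hPhi, hy.1, hy.2]; ring
  · intro z hz
    filter_upwards [hfar1 z (hdist z (Or.inl hz))] with y hy
    rw [hPhi, hy.1, hy.2]; ring

/-! ### Cutoffs and admissible pairs -/

lemma mmcut_eq (v lam c : ℝ) : mmcut v lam c = mcut v lam (-c) := by
  unfold mmcut mcut
  rw [← sub_eq_add_neg, sub_neg_eq_add]

lemma mcut_lip {u lo c x y : ℝ} (hlo : 0 < lo) (hx : lo ≤ x) (hy : lo ≤ y) (h1 : -1 < c)
    (h2 : c < u) : |mcut u x c - mcut u y c| ≤ 1 / lo * |x - y| := by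
  have ha : 0 < 1 + c := by linarith
  have hb : 0 < u - c := by linarith
  have hx0 := hlo.trans_le hx
  have hy0 := hlo.trans_le hy
  have e : mcut u x c - mcut u y c =
      ((1 + c) * (u - c)) / ((x * (1 + c) + (u - c)) * (y * (1 + c) + (u - c))) * (x - y) := by
    unfold mcut
    have : x * (1 + c) + (u - c) ≠ 0 := by positivity
    have : y * (1 + c) + (u - c) ≠ 0 := by positivity
    field_simp
    ring
  rw [e, abs_mul, abs_of_nonneg (by positivity)]
  refine mul_le_mul_of_nonneg_right ?_ (abs_nonneg _)
  rw [div_le_div_iff₀ (by positivity) hlo, one_mul]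
  have k1 : lo * (1 + c) ≤ x * (1 + c) + (u - c) := by nlinarith
  have k2 : (u - c) ≤ y * (1 + c) + (u - c) := by nlinarith [mul_pos hy0 ha]
  have := mul_le_mul k1 k2 hb.le (by positivity)
  linarith

lemma mcut_continuousAt {u : ℝ} {q : ℝ × ℝ} (h0 : 0 < q.1) (h1 : -1 < q.2) (h2 : q.2 < u) :
    ContinuousAt (fun q : ℝ × ℝ => mcut u q.1 q.2) q := by
  unfold mcut
  have hn : q.1 * (1 + q.2) + (u - q.2) ≠ 0 := by
    have ha : 0 < 1 + q.2 := by linarith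
    have hb : 0 < u - q.2 := by linarith
    positivity
  exact ContinuousAt.div (by fun_prop) (by fun_prop) hn

lemma mcut_zero_continuousAt {u : ℝ} (hu : 0 < u) {q : ℝ × ℝ} (h0 : 0 < q.1) :
    ContinuousAt (fun q : ℝ × ℝ => mcut u q.1 0) q :=
  ContinuousAt.comp (f := fun q : ℝ × ℝ => (q.1, (0 : ℝ))) (x := q)
    (mcut_continuousAt (q := (q.1, 0)) h0 (by norm_num) hu) (by fun_prop)

lemma mmcut_continuousAt {v : ℝ} {q : ℝ × ℝ} (h0 : 0 < q.1) (h1 : -v < q.2) (h2 : q.2 < 1) :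
    ContinuousAt (fun q : ℝ × ℝ => mmcut v q.1 q.2) q := by
  simp only [mmcut_eq]
  exact ContinuousAt.comp (f := fun q : ℝ × ℝ => (q.1, -q.2)) (x := q)
    (mcut_continuousAt (q := (q.1, -q.2)) h0 (by simp; linarith) (by simp; linarith))
    (by fun_prop)

lemma mmcut_zero_continuousAt {v : ℝ} (hv : 0 < v) {q : ℝ × ℝ} (h0 : 0 < q.1) :
    ContinuousAt (fun q : ℝ × ℝ => mmcut v q.1 0) q := by
  simp only [mmcut_eq, neg_zero]
  exact mcut_zero_continuousAt hv h0

/-- The closed counterpart of the pairs `(λ, c)` entering the stationary sets: all four cutoffs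
lie in the closed interval `[slo, shi]`, and `λ ≥ lo`. -/
def AdmPairs (u v slo shi lo : ℝ) : Set (ℝ × ℝ) :=
  {q | lo ≤ q.1 ∧ (-1 < q.2 ∧ q.2 < u) ∧ (-v < q.2 ∧ q.2 < 1) ∧
    mcut u q.1 0 ∈ Icc slo shi ∧ mmcut v q.1 0 ∈ Icc slo shi ∧
    mcut u q.1 q.2 ∈ Icc slo shi ∧ mmcut v q.1 q.2 ∈ Icc slo shi}

/-- The shocks `c` for which `G_f(λ,0) = G_f(λ,c) = 0` for some `(λ, c) ∈ Q`. -/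
def Zset (p u v slo shi : ℝ) (f : ℝ → ℝ) (Q : Set (ℝ × ℝ)) : Set ℝ :=
  {c | ∃ lam, (lam, c) ∈ Q ∧ Gfun p u v slo shi f lam 0 = 0 ∧ Gfun p u v slo shi f lam c = 0}

lemma Gfun_continuousOn {p u v slo shi lo : ℝ} {f : ℝ → ℝ} (hslo : 0 < slo) (hss : slo < shi)
    (hshi : shi < 1) (hlo : 0 < lo) (hf : f ∈ Fclass slo shi) :
    ContinuousOn (fun q : ℝ × ℝ => Gfun p u v slo shi f q.1 q.2) (AdmPairs u v slo shi lo) := by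
  have bf := bddCont_of_mem hf
  have hP := Phi_continuousOn hslo hss hshi bf
  have h1 : ContinuousOn (fun q : ℝ × ℝ => p * Phi slo f (mcut u q.1 q.2)
      - (1 - p) * Phi slo f (mmcut v q.1 q.2)) (AdmPairs u v slo shi lo) := by
    refine (continuousOn_const.mul (hP.comp ?_ ?_)).sub (continuousOn_const.mul (hP.comp ?_ ?_))
    · exact fun q hq => (mcut_continuousAt (hlo.trans_le hq.1) hq.2.1.1 hq.2.1.2).continuousWithinAt
    · exact fun q hq => hq.2.2.2.2.2.1
    · exact fun q hq =>
        (mmcut_continuousAt (hlo.trans_le hq.1) hq.2.2.1.1 hq.2.2.1.2).continuousWithinAt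
    · exact fun q hq => hq.2.2.2.2.2.2
  refine h1.congr fun q hq => ?_
  exact Gfun_eq hslo hss hshi bf hf.2.2.2.1 hq.2.2.2.2.2.2

lemma Gfun_zero_continuousOn {p u v slo shi lo : ℝ} {f : ℝ → ℝ} (hu : 0 < u) (hv : 0 < v)
    (hslo : 0 < slo) (hss : slo < shi)
    (hshi : shi < 1) (hlo : 0 < lo) (hf : f ∈ Fclass slo shi) :
    ContinuousOn (fun q : ℝ × ℝ => Gfun p u v slo shi f q.1 0) (AdmPairs u v slo shi lo) := by
  refine (Gfun_continuousOn (p := p) (u := u) (v := v) hslo hss hshi hlo hf).comp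
    (f := fun q : ℝ × ℝ => (q.1, (0 : ℝ))) (by fun_prop) ?_
  intro q hq
  exact ⟨hq.1, ⟨by norm_num, hu⟩, ⟨by simpa using hv, by norm_num⟩, hq.2.2.2.1, hq.2.2.2.2.1,
    hq.2.2.2.1, hq.2.2.2.2.1⟩

lemma Gfun_lip {p u v slo shi lo : ℝ} (hp : p ∈ Ioo (0:ℝ) 1) {f : ℝ → ℝ}
    (hslo : 0 < slo) (hss : slo < shi)
    (hshi : shi < 1) (hlo : 0 < lo) (hf : f ∈ Fclass slo shi) :
    ∃ C : ℝ, ∀ c x y, -1 < c → c < u → -v < c → c < 1 → lo ≤ x → lo ≤ y →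
      mcut u x c ∈ Icc slo shi → mmcut v x c ∈ Icc slo shi →
      mcut u y c ∈ Icc slo shi → mmcut v y c ∈ Icc slo shi →
      |Gfun p u v slo shi f x c - Gfun p u v slo shi f y c| ≤ C * |x - y| := by
  have bf := bddCont_of_mem hf
  obtain ⟨M, hM⟩ := bf.2
  have hM0 : 0 ≤ M := by
    obtain ⟨s, hs⟩ := nonempty_Ioo.2 hss
    exact (abs_nonneg _).trans (hM s hs)
  refine ⟨M / slo * (1 / lo), fun c x y h1 h2 h3 h4 hx hy mx mmx my mmy => ?_⟩
  rw [Gfun_eq hslo hss hshi bf hf.2.2.2.1 mmx, Gfun_eq hslo hss hshi bf hf.2.2.2.1 mmy]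
  have a1 := Phi_lip hslo hss hshi bf hM my mx
  have a2 := Phi_lip hslo hss hshi bf hM mmy mmx
  have b1 := mcut_lip hlo hx hy h1 h2
  have b2 : |mmcut v x c - mmcut v y c| ≤ 1 / lo * |x - y| := by
    rw [mmcut_eq, mmcut_eq]
    exact mcut_lip hlo hx hy (by linarith) (by linarith)
  have c1 := abs_le.1 (a1.trans (mul_le_mul_of_nonneg_left b1 (div_nonneg hM0 hslo.le)))
  have c2 := abs_le.1 (a2.trans (mul_le_mul_of_nonneg_left b2 (div_nonneg hM0 hslo.le)))
  rw [mul_assoc]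
  have := hp.1
  have := hp.2
  rw [abs_le]
  constructor <;> nlinarith

/-- A Lipschitz curve in the plane has zero area. -/
lemma volume_curve_eq_zero {a b : ℝ → ℝ} {K : Set ℝ} {A B : ℝ}
    (ha : ∀ x ∈ K, ∀ y ∈ K, |a x - a y| ≤ A * |x - y|)
    (hb : ∀ x ∈ K, ∀ y ∈ K, |b x - b y| ≤ B * |x - y|) :
    volume ((fun x => (a x, b x)) '' K) = 0 := by
  have h : LipschitzOnWith (Real.toNNReal (max A B)) (fun x => (a x, b x)) K := by
    refine LipschitzOnWith.of_dist_le_mul fun x hx y hy => ?_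
    have h2 : max A B * |x - y| ≤ (Real.toNNReal (max A B)) * |x - y| := by
      gcongr
      exact Real.le_coe_toNNReal _
    rw [Prod.dist_eq, Real.dist_eq, Real.dist_eq, Real.dist_eq]
    refine max_le ?_ ?_
    · exact ((ha x hx y hy).trans
        (mul_le_mul_of_nonneg_right (le_max_left _ _) (abs_nonneg _))).trans h2
    · exact ((hb x hx y hy).trans
        (mul_le_mul_of_nonneg_right (le_max_right _ _) (abs_nonneg _))).trans h2
  have h1 : dimH ((fun x => (a x, b x)) '' K) ≤ 1 :=
    h.dimH_image_le.trans ((dimH_mono (subset_univ K)).trans_eq Real.dimH_univ)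
  have h3 := hausdorffMeasure_of_dimH_lt (d := 2) (h1.trans_lt (by norm_num))
  rw [← hausdorffMeasure_prod_real]
  simpa using h3

/-! ### Robustness of null stationary sets -/

/-- Signals whose stationary set over `Q` is uniformly small in a ball are dense in `Fclass`. -/
def DenseRobust (p u v slo shi : ℝ) (Q : Set (ℝ × ℝ)) : Prop :=
  ∀ f ∈ Fclass slo shi, ∀ ε > (0:ℝ), ∀ η > (0:ℝ≥0∞), ∃ g ∈ Fclass slo shi,
    supDist slo shi f g < ε ∧ ∃ δ > (0:ℝ), ∀ h ∈ Fclass slo shi,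
      supDist slo shi g h < δ → volume (Zset p u v slo shi h Q) < η

/-- Upper semicontinuity: off an open neighbourhood of the null set `Zset g Q`, compactness bounds
`|G_g(λ,0)| + |G_g(λ,c)|` below, and this survives small perturbations of `g`. -/
lemma robust_of_null {p u v slo shi lo : ℝ} (hp : p ∈ Ioo (0:ℝ) 1) (hu : 0 < u) (hv : 0 < v)
    (hslo : 0 < slo) (hss : slo < shi) (hshi : shi < 1) (hlo : 0 < lo) {Q : Set (ℝ × ℝ)}
    (hQ : IsCompact Q) (hQA : Q ⊆ AdmPairs u v slo shi lo) {g : ℝ → ℝ} (hg : g ∈ Fclass slo shi)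
    (hnull : volume (Zset p u v slo shi g Q) = 0) {η : ℝ≥0∞} (hη : 0 < η) :
    ∃ δ > (0:ℝ), ∀ h ∈ Fclass slo shi,
      supDist slo shi g h < δ → volume (Zset p u v slo shi h Q) < η := by
  obtain ⟨U, hUsub, hUo, hUlt⟩ := Set.exists_isOpen_lt_of_lt _ η (hnull.trans_lt hη)
  set H : ℝ × ℝ → ℝ := fun q =>
    |Gfun p u v slo shi g q.1 0| + |Gfun p u v slo shi g q.1 q.2| with hH
  have hHc : ContinuousOn H Q :=
    ((Gfun_zero_continuousOn hu hv hslo hss hshi hlo hg).mono hQA).abs.add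
      ((Gfun_continuousOn hslo hss hshi hlo hg).mono hQA).abs
  have hK : IsCompact (Q ∩ {q | q.2 ∈ Uᶜ}) :=
    hQ.inter_right (hUo.isClosed_compl.preimage continuous_snd)
  obtain ⟨θ, hθ, hθle⟩ : ∃ θ > 0, ∀ q ∈ Q ∩ {q | q.2 ∈ Uᶜ}, θ ≤ H q := by
    rcases (Q ∩ {q | q.2 ∈ Uᶜ}).eq_empty_or_nonempty with he | hne
    · exact ⟨1, one_pos, fun q hq => by rw [he] at hq; exact hq.elim⟩
    · obtain ⟨q₀, hq₀, hmin⟩ := hK.exists_isMinOn hne (hHc.mono inter_subset_left)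
      refine ⟨H q₀, ?_, fun q hq => hmin hq⟩
      have h0 : 0 ≤ H q₀ := by positivity
      refine lt_of_le_of_ne h0 fun h => hq₀.2 (hUsub ?_)
      have e1 : |Gfun p u v slo shi g q₀.1 0| = 0 := by
        have := abs_nonneg (Gfun p u v slo shi g q₀.1 0)
        have := abs_nonneg (Gfun p u v slo shi g q₀.1 q₀.2)
        simp only [hH] at h
        linarith
      have e2 : |Gfun p u v slo shi g q₀.1 q₀.2| = 0 := by
        simp only [hH] at h
        linarith
      exact ⟨q₀.1, hq₀.1, abs_eq_zero.1 e1, abs_eq_zero.1 e2⟩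
  refine ⟨θ * slo / 3, by positivity, fun h hh hd => (measure_mono ?_).trans_lt hUlt⟩
  rintro c ⟨lam, hq, z0, zc⟩
  by_contra hcU
  have hθ2 := hθle (lam, c) ⟨hq, hcU⟩
  obtain ⟨-, -, -, hm0, hmm0, hm, hmm⟩ := hQA hq
  have k1 := Gfun_close (p := p) hp hslo hss hshi hg hh hd.le hm0 hmm0
  have k2 := Gfun_close (p := p) hp hslo hss hshi hg hh hd.le hm hmm
  simp only at k1 k2
  rw [z0, sub_zero] at k1
  rw [zc, sub_zero] at k2
  have e : θ * slo / 3 / slo = θ / 3 := by field_simp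
  rw [e] at k1 k2
  simp only [hH] at hθ2
  linarith

lemma DenseRobust.mono {p u v slo shi : ℝ} {Q Q' : Set (ℝ × ℝ)} (hsub : Q ⊆ Q')
    (h : DenseRobust p u v slo shi Q') : DenseRobust p u v slo shi Q := by
  intro f hf ε hε η hη
  obtain ⟨g, hg, hd, δ, hδ, hh⟩ := h f hf ε hε η hη
  refine ⟨g, hg, hd, δ, hδ, fun k hk hkd => (measure_mono ?_).trans_lt (hh k hk hkd)⟩
  rintro c ⟨lam, hq, hz⟩
  exact ⟨lam, hsub hq, hz⟩

lemma DenseRobust.union {p u v slo shi : ℝ} (hss : slo < shi) {Q Q' : Set (ℝ × ℝ)}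
    (h : DenseRobust p u v slo shi Q) (h' : DenseRobust p u v slo shi Q') :
    DenseRobust p u v slo shi (Q ∪ Q') := by
  intro f hf ε hε η hη
  have hη2 : 0 < η / 2 := ENNReal.half_pos hη.ne'
  obtain ⟨g₁, hg₁, hd₁, δ₁, hδ₁, hh₁⟩ := h f hf (ε / 2) (by positivity) _ hη2
  obtain ⟨g₂, hg₂, hd₂, δ₂, hδ₂, hh₂⟩ := h' g₁ hg₁ (min (ε / 2) (δ₁ / 2)) (by positivity) _ hη2
  have hA := lt_min_iff.1 hd₂
  have t1 := supDist_triangle hss (bddCont_of_mem hf) (bddCont_of_mem hg₁) (bddCont_of_mem hg₂)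
  refine ⟨g₂, hg₂, by linarith, min δ₂ (δ₁ / 2), by positivity, fun k hk hkd => ?_⟩
  have hB := lt_min_iff.1 hkd
  have t2 := supDist_triangle hss (bddCont_of_mem hg₁) (bddCont_of_mem hg₂) (bddCont_of_mem hk)
  have m1 := hh₁ k hk (by linarith)
  have m2 := hh₂ k hk hB.1
  have hsub : Zset p u v slo shi k (Q ∪ Q') ⊆
      Zset p u v slo shi k Q ∪ Zset p u v slo shi k Q' := by
    rintro c ⟨lam, hq | hq, hz⟩
    · exact Or.inl ⟨lam, hq, hz⟩
    · exact Or.inr ⟨lam, hq, hz⟩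
  calc volume (Zset p u v slo shi k (Q ∪ Q')) ≤ _ := measure_mono hsub
    _ ≤ _ := measure_union_le _ _
    _ < η / 2 + η / 2 := ENNReal.add_lt_add m1 m2
    _ = η := ENNReal.add_halves η

/-! ### The local perturbation argument -/

lemma add_smul_mem {slo shi : ℝ} {f ψ : ℝ → ℝ} (hslo : 0 < slo) (hss : slo < shi) (hshi : shi < 1)
    (hf : f ∈ Fclass slo shi) (hψ : BddCont slo shi ψ) (h1 : (∫ s in slo..shi, ψ s) = 0)
    (h2 : Phi slo ψ shi = 0) (t : ℝ) (h0 : ∀ s ∈ Ioo slo shi, 0 ≤ f s + t * ψ s) :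
    (fun s => f s + t * ψ s) ∈ Fclass slo shi := by
  have bf := bddCont_of_mem hf
  refine mem_Fclass_of hslo hshi (bf.add (hψ.smul t)) h0 ?_ ?_
  · rw [intervalIntegral.integral_add (bf.intervalIntegrable hss)
      ((hψ.smul t).intervalIntegrable hss), intervalIntegral.integral_const_mul, h1, hf.2.2.1]
    ring
  · rw [Phi_add_smul hslo hss hshi bf hψ t ⟨hss.le, le_rfl⟩, h2,
      show Phi slo f shi = 0 from hf.2.2.2.1]
    ring

lemma Gfun_add_smul {p u v slo shi : ℝ} {f ψ : ℝ → ℝ} (hslo : 0 < slo) (hss : slo < shi)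
    (hshi : shi < 1) (hf : f ∈ Fclass slo shi) (hψ : BddCont slo shi ψ)
    (h2 : Phi slo ψ shi = 0) (t : ℝ) {lam c : ℝ} (hm : mcut u lam c ∈ Icc slo shi)
    (hmm : mmcut v lam c ∈ Icc slo shi) :
    Gfun p u v slo shi (fun s => f s + t * ψ s) lam c = Gfun p u v slo shi f lam c
      + t * (p * Phi slo ψ (mcut u lam c) - (1 - p) * Phi slo ψ (mmcut v lam c)) := by
  have bf := bddCont_of_mem hf
  have h3 : Phi slo (fun s => f s + t * ψ s) shi = 0 := by
    rw [Phi_add_smul hslo hss hshi bf hψ t ⟨hss.le, le_rfl⟩, h2,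
      show Phi slo f shi = 0 from hf.2.2.2.1]
    ring
  rw [Gfun_eq hslo hss hshi (bf.add (hψ.smul t)) h3 hmm, Gfun_eq hslo hss hshi bf hf.2.2.2.1 hmm,
    Phi_add_smul hslo hss hshi bf hψ t hm, Phi_add_smul hslo hss hshi bf hψ t hmm]
  ring

/-- If `f` moves in two directions that shift `G(λ,0)` and `G(λ,c)` independently by constants
over `Q`, then for each `c` the bad parameters `(t₁, t₂)` form a Lipschitz curve parametrized by
`λ`, hence a null set; by Fubini almost every parameter gives a null stationary set. -/
lemma exists_null_parameter {p u v slo shi lo : ℝ} (hp : p ∈ Ioo (0:ℝ) 1) (hu : 0 < u) (hv : 0 < v)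
    (hslo : 0 < slo) (hss : slo < shi) (hshi : shi < 1) (hlo : 0 < lo) {Q : Set (ℝ × ℝ)}
    (hQ : IsCompact Q) (hQA : Q ⊆ AdmPairs u v slo shi lo) {f : ℝ → ℝ} (hf : f ∈ Fclass slo shi)
    (κ₁ κ₂ : ℝ) {ρ : ℝ} (hρ : 0 < ρ) :
    ∃ t₁ t₂ : ℝ, |t₁| < ρ ∧ |t₂| < ρ ∧ volume {c | ∃ lam, (lam, c) ∈ Q ∧
      t₁ = κ₁ * Gfun p u v slo shi f lam 0 ∧ t₂ = κ₂ * Gfun p u v slo shi f lam c} = 0 := by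
  set T : ℝ × ℝ → ℝ × (ℝ × ℝ) := fun q =>
    (q.2, (κ₁ * Gfun p u v slo shi f q.1 0, κ₂ * Gfun p u v slo shi f q.1 q.2)) with hT
  have hTc : ContinuousOn T Q := by
    refine continuousOn_snd.prodMk (ContinuousOn.prodMk ?_ ?_)
    · exact continuousOn_const.mul
        ((Gfun_zero_continuousOn hu hv hslo hss hshi hlo hf).mono hQA)
    · exact continuousOn_const.mul ((Gfun_continuousOn hslo hss hshi hlo hf).mono hQA)
  have hBad : MeasurableSet (T '' Q) := (hQ.image_of_continuousOn hTc).measurableSet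
  obtain ⟨C, hC⟩ := Gfun_lip (p := p) (u := u) (v := v) hp hslo hss hshi hlo hf
  have hslice : ∀ᵐ c : ℝ, ∀ᵐ t : ℝ × ℝ, (c, t) ∉ T '' Q := by
    refine Filter.Eventually.of_forall fun c => ?_
    rw [ae_iff]
    have h0 := volume_curve_eq_zero (K := {lam | (lam, c) ∈ Q})
      (a := fun lam => κ₁ * Gfun p u v slo shi f lam 0)
      (b := fun lam => κ₂ * Gfun p u v slo shi f lam c) (A := |κ₁| * C) (B := |κ₂| * C) ?_ ?_
    · refine measure_mono_null ?_ h0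
      intro t ht
      simp only [not_not, mem_ofPred_eq] at ht
      obtain ⟨q, hq, he⟩ := ht
      rw [hT] at he
      simp only [Prod.mk.injEq] at he
      obtain ⟨rfl, he⟩ := he
      exact ⟨q.1, hq, he⟩
    · intro x hx y hy
      obtain ⟨a1, -, -, a4, a5, -, -⟩ := hQA hx
      obtain ⟨b1, -, -, b4, b5, -, -⟩ := hQA hy
      rw [← mul_sub, abs_mul, mul_assoc]
      exact mul_le_mul_of_nonneg_left
        (hC 0 x y (by norm_num) hu (by linarith) one_pos a1 b1 a4 a5 b4 b5) (abs_nonneg _)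
    · intro x hx y hy
      obtain ⟨a1, a2, a3, -, -, a6, a7⟩ := hQA hx
      obtain ⟨b1, -, -, -, -, b6, b7⟩ := hQA hy
      rw [← mul_sub, abs_mul, mul_assoc]
      exact mul_le_mul_of_nonneg_left
        (hC c x y a2.1 a2.2 a3.1 a3.2 a1 b1 a6 a7 b6 b7) (abs_nonneg _)
  have hswap : ∀ᵐ t : ℝ × ℝ, ∀ᵐ c : ℝ, (c, t) ∉ T '' Q :=
    (Measure.ae_ae_comm (p := fun c t => (c, t) ∉ T '' Q) hBad.compl).1 hslice
  obtain ⟨t, ht, htd⟩ := (Measure.dense_of_ae hswap).exists_dist_lt (0 : ℝ × ℝ) hρ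
  rw [dist_comm, dist_zero_right, Prod.norm_def, max_lt_iff] at htd
  refine ⟨t.1, t.2, htd.1, htd.2, measure_mono_null ?_ (ae_iff.1 ht)⟩
  rintro c ⟨lam, hq, h1, h2⟩
  simp only [not_not, mem_ofPred_eq]
  exact ⟨(lam, c), hq, by rw [hT]; simp [← h1, ← h2]⟩

/-- The conclusion for a compact set `Q` of pairs over which `ψ₁` shifts only `G(λ,0)` and `ψ₂`
shifts only `G(λ,c)`, each by a nonzero constant. -/
lemma local_dense {p u v slo shi lo : ℝ} (hp : p ∈ Ioo (0:ℝ) 1) (hu : 0 < u) (hv : 0 < v)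
    (hslo : 0 < slo) (hss : slo < shi) (hshi : shi < 1) (hlo : 0 < lo) {Q : Set (ℝ × ℝ)}
    (hQ : IsCompact Q) (hQA : Q ⊆ AdmPairs u v slo shi lo) {ψ₁ ψ₂ : ℝ → ℝ}
    (c₁ : Continuous ψ₁) (c₂ : Continuous ψ₂)
    (i₁ : (∫ s in slo..shi, ψ₁ s) = 0) (i₂ : (∫ s in slo..shi, ψ₂ s) = 0)
    (j₁ : Phi slo ψ₁ shi = 0) (j₂ : Phi slo ψ₂ shi = 0) {κ₁ κ₂ : ℝ} (k₁ : κ₁ ≠ 0) (k₂ : κ₂ ≠ 0)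
    (e₁ : ∀ q ∈ Q, p * Phi slo ψ₁ (mcut u q.1 0) - (1 - p) * Phi slo ψ₁ (mmcut v q.1 0) = κ₁)
    (e₁' : ∀ q ∈ Q, p * Phi slo ψ₁ (mcut u q.1 q.2) - (1 - p) * Phi slo ψ₁ (mmcut v q.1 q.2) = 0)
    (e₂ : ∀ q ∈ Q, p * Phi slo ψ₂ (mcut u q.1 q.2) - (1 - p) * Phi slo ψ₂ (mmcut v q.1 q.2) = κ₂)
    (e₂' : ∀ q ∈ Q, p * Phi slo ψ₂ (mcut u q.1 0) - (1 - p) * Phi slo ψ₂ (mmcut v q.1 0) = 0) :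
    DenseRobust p u v slo shi Q := by
  intro f hf ε hε η hη
  obtain ⟨w, hw, κ, hκ, hwκ⟩ := exists_pos_signal hslo hss hshi (half_mem hslo hss hshi hf)
  have bf := bddCont_of_mem hf
  have bw := bddCont_of_mem hw
  have hbdd : ∀ ψ : ℝ → ℝ, Continuous ψ → ∃ B : ℝ, 0 ≤ B ∧ ∀ s ∈ Ioo slo shi, |ψ s| ≤ B := by
    intro ψ hψ
    obtain ⟨M, hM⟩ := isCompact_Icc.exists_bound_of_continuousOn (s := Icc slo shi)
      hψ.continuousOn
    exact ⟨|M|, abs_nonneg _, fun s hs => (hM s (Ioo_subset_Icc_self hs)).trans (le_abs_self M)⟩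
  obtain ⟨B₁, hB₁, hB₁'⟩ := hbdd ψ₁ c₁
  obtain ⟨B₂, hB₂, hB₂'⟩ := hbdd ψ₂ c₂
  have bψ₁ : BddCont slo shi ψ₁ := ⟨c₁.continuousOn, B₁, hB₁'⟩
  have bψ₂ : BddCont slo shi ψ₂ := ⟨c₂.continuousOn, B₂, hB₂'⟩
  have bd : BddCont slo shi (fun s => w s + (-1) * f s) := bw.add (bf.smul (-1))
  obtain ⟨D, hD⟩ := bd.2
  have hD0 : 0 ≤ D := by
    obtain ⟨s, hs⟩ := nonempty_Ioo.2 hss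
    exact (abs_nonneg _).trans (hD s hs)
  -- mixing in a small share `τ` of `w` makes the signal bounded below by `τ κ`
  obtain ⟨τ, hτ, hτ1, hτD⟩ : ∃ τ : ℝ, 0 < τ ∧ τ ≤ 1 ∧ τ * D ≤ ε / 4 := by
    refine ⟨min 1 (ε / (4 * (D + 1))), by positivity, min_le_left _ _, ?_⟩
    calc min 1 (ε / (4 * (D + 1))) * D ≤ ε / (4 * (D + 1)) * (D + 1) := by
          gcongr
          · exact min_le_right _ _
          · linarith
      _ = ε / 4 := by field_simp
  set f₁ : ℝ → ℝ := fun s => f s + τ * (w s + (-1) * f s) with hf₁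
  have hlow : ∀ s ∈ Ioo slo shi, τ * κ ≤ f₁ s := fun s hs => by
    have h1 := hf.2.1 s hs
    have h2 := hwκ s hs
    simp only [hf₁]
    nlinarith [mul_nonneg (sub_nonneg.2 hτ1) h1]
  have hf₁mem : f₁ ∈ Fclass slo shi := by
    refine add_smul_mem hslo hss hshi hf bd ?_ ?_ τ fun s hs => (by positivity : 0 ≤ τ * κ).trans
      (hlow s hs)
    · rw [intervalIntegral.integral_add (bw.intervalIntegrable hss)
        ((bf.smul (-1)).intervalIntegrable hss), intervalIntegral.integral_const_mul,
        hf.2.2.1, hw.2.2.1]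
      ring
    · rw [Phi_add_smul hslo hss hshi bw bf (-1) ⟨hss.le, le_rfl⟩,
        show Phi slo f shi = 0 from hf.2.2.2.1, show Phi slo w shi = 0 from hw.2.2.2.1]
      ring
  obtain ⟨ρ, hρ, hρ1, hρ2⟩ : ∃ ρ : ℝ, 0 < ρ ∧ ρ * (B₁ + B₂) ≤ τ * κ ∧ ρ * (B₁ + B₂) ≤ ε / 4 := by
    have hm : 0 < min (τ * κ) (ε / 4) := by positivity
    have key : min (τ * κ) (ε / 4) / (B₁ + B₂ + 1) * (B₁ + B₂) ≤ min (τ * κ) (ε / 4) := by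
      rw [div_mul_eq_mul_div, div_le_iff₀ (by positivity)]
      nlinarith
    exact ⟨_, by positivity, key.trans (min_le_left _ _), key.trans (min_le_right _ _)⟩
  obtain ⟨t₁, t₂, ht₁, ht₂, hnull⟩ := exists_null_parameter hp hu hv hslo hss hshi hlo hQ hQA
    hf₁mem (-κ₁⁻¹) (-κ₂⁻¹) hρ
  have a₁ : ∀ s ∈ Ioo slo shi, |t₁ * ψ₁ s| ≤ ρ * B₁ := fun s hs => by
    rw [abs_mul]; exact mul_le_mul ht₁.le (hB₁' s hs) (abs_nonneg _) hρ.le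
  have a₂ : ∀ s ∈ Ioo slo shi, |t₂ * ψ₂ s| ≤ ρ * B₂ := fun s hs => by
    rw [abs_mul]; exact mul_le_mul ht₂.le (hB₂' s hs) (abs_nonneg _) hρ.le
  have hρB₂ : 0 ≤ ρ * B₂ := by positivity
  set f₂ : ℝ → ℝ := fun s => f₁ s + t₁ * ψ₁ s with hf₂
  have hf₂mem : f₂ ∈ Fclass slo shi := add_smul_mem hslo hss hshi hf₁mem bψ₁ i₁ j₁ t₁
    fun s hs => by linarith [hlow s hs, (abs_le.1 (a₁ s hs)).1]
  set g : ℝ → ℝ := fun s => f₂ s + t₂ * ψ₂ s with hgdef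
  have hgmem : g ∈ Fclass slo shi := add_smul_mem hslo hss hshi hf₂mem bψ₂ i₂ j₂ t₂
    fun s hs => by
      simp only [hf₂]
      linarith [hlow s hs, (abs_le.1 (a₁ s hs)).1, (abs_le.1 (a₂ s hs)).1]
  refine ⟨g, hgmem, ?_, robust_of_null hp hu hv hslo hss hshi hlo hQ hQA hgmem
    (measure_mono_null ?_ hnull) hη⟩
  · refine (supDist_le hss (B := ε / 2) fun s hs => ?_).trans_lt (by linarith)
    have b1 := abs_le.1 (a₁ s hs)
    have b2 := abs_le.1 (a₂ s hs)
    have b3 : |τ * (w s + (-1) * f s)| ≤ τ * D := by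
      rw [abs_mul, abs_of_pos hτ]
      exact mul_le_mul_of_nonneg_left (hD s hs) hτ.le
    have b3' := abs_le.1 b3
    simp only [hgdef, hf₂, hf₁]
    rw [abs_le]
    constructor <;> linarith
  · rintro c ⟨lam, hq, z0, zc⟩
    obtain ⟨-, -, -, hm0, hmm0, hm, hmm⟩ := hQA hq
    have q1 := e₁ _ hq
    have q1' := e₁' _ hq
    have q2 := e₂ _ hq
    have q2' := e₂' _ hq
    simp only at hm0 hmm0 hm hmm q1 q1' q2 q2'
    rw [hgdef, Gfun_add_smul hslo hss hshi hf₂mem bψ₂ j₂ t₂ hm0 hmm0, hf₂,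
      Gfun_add_smul hslo hss hshi hf₁mem bψ₁ j₁ t₁ hm0 hmm0, q1, q2'] at z0
    rw [hgdef, Gfun_add_smul hslo hss hshi hf₂mem bψ₂ j₂ t₂ hm hmm, hf₂,
      Gfun_add_smul hslo hss hshi hf₁mem bψ₁ j₁ t₁ hm hmm, q1', q2] at zc
    refine ⟨lam, hq, ?_, ?_⟩
    · field_simp
      linarith
    · field_simp
      linarith

/-- A direction that shifts `p Φ(y₁) - (1-p) Φ(y₂)` by a nonzero constant near `q` without moving
`Φ(y₃)` and `Φ(y₄)`. -/
lemma exists_shift {p slo shi : ℝ} (hp : p ∈ Ioo (0:ℝ) 1) {q : ℝ × ℝ} {y₁ y₂ y₃ y₄ : ℝ × ℝ → ℝ}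
    (h₁ : ContinuousAt y₁ q) (h₂ : ContinuousAt y₂ q) (h₃ : ContinuousAt y₃ q)
    (h₄ : ContinuousAt y₄ q) (n12 : y₁ q ≠ y₂ q) (n13 : y₁ q ≠ y₃ q) (n14 : y₁ q ≠ y₄ q)
    (n23 : y₂ q ≠ y₃ q) (n24 : y₂ q ≠ y₄ q)
    (hI : y₁ q ∈ Ioo slo shi ∨ y₂ q ∈ Ioo slo shi) :
    ∃ (ψ : ℝ → ℝ) (κ : ℝ), κ ≠ 0 ∧ Continuous ψ ∧ (∫ s in slo..shi, ψ s) = 0 ∧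
      Phi slo ψ shi = 0 ∧ ∀ᶠ r in nhds q,
        p * Phi slo ψ (y₁ r) - (1 - p) * Phi slo ψ (y₂ r) = κ ∧
        p * Phi slo ψ (y₃ r) - (1 - p) * Phi slo ψ (y₄ r) = 0 := by
  rcases hI with hI | hI
  · obtain ⟨ψ, hc, hi, hj, hx, hF⟩ := exists_direction hI {y₂ q, y₃ q, y₄ q} (by simp)
      (by simp [n12, n13, n14])
    refine ⟨ψ, p * 2, (mul_pos hp.1 two_pos).ne', hc, hi, hj, ?_⟩
    filter_upwards [h₁.eventually hx, h₂.eventually (hF _ (by simp)),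
      h₃.eventually (hF _ (by simp)), h₄.eventually (hF _ (by simp))] with r r1 r2 r3 r4
    rw [r1, r2, r3, r4]
    constructor <;> ring
  · obtain ⟨ψ, hc, hi, hj, hx, hF⟩ := exists_direction hI {y₁ q, y₃ q, y₄ q} (by simp)
      (by simp [n12.symm, n23, n24])
    refine ⟨ψ, -((1 - p) * 2), neg_ne_zero.2 (mul_pos (sub_pos.2 hp.2) two_pos).ne', hc, hi, hj, ?_⟩
    filter_upwards [h₂.eventually hx, h₁.eventually (hF _ (by simp)),
      h₃.eventually (hF _ (by simp)), h₄.eventually (hF _ (by simp))] with r r2 r1 r3 r4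
    rw [r1, r2, r3, r4]
    constructor <;> ring

/-! ### Exceptional shocks -/

lemma mcut_eq_mcut {u u' lam c c' : ℝ} (hlam : 0 < lam) (h1 : -1 < c) (h2 : c < u) (h1' : -1 < c')
    (h2' : c' < u') (h : mcut u lam c = mcut u' lam c') :
    (1 + c) * (u' - c') = (1 + c') * (u - c) := by
  have ha : 0 < 1 + c := by linarith
  have hb : 0 < u - c := by linarith
  have ha' : 0 < 1 + c' := by linarith
  have hb' : 0 < u' - c' := by linarith
  unfold mcut at h
  rw [div_eq_div_iff (by positivity) (by positivity)] at h
  have : lam * ((1 + c) * (u' - c')) = lam * ((1 + c') * (u - c)) := by linarith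
  exact mul_left_cancel₀ hlam.ne' this

lemma mcut_eq_odds {u lam c x : ℝ} (hlam : 0 < lam) (h1 : -1 < c) (h2 : c < u)
    (h : mcut u lam c = x) : lam * (1 + c) * (1 - x) = x * (u - c) := by
  have ha : 0 < 1 + c := by linarith
  have hb : 0 < u - c := by linarith
  unfold mcut at h
  rw [div_eq_iff (by positivity)] at h
  linarith

/-- The roots in `c` of the equation saying that the two cutoffs equal `x` and `y` for a common
`λ`. -/
lemma finite_corner (u v : ℝ) {x y : ℝ} (hxy : x ≠ y) :
    {c : ℝ | x * (1 - y) * ((u - c) * (1 - c)) = y * (1 - x) * ((v + c) * (1 + c))}.Finite := by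
  set P : Polynomial ℝ := Polynomial.C (x - y) * Polynomial.X ^ 2
    + Polynomial.C (-(x * (1 - y)) * (u + 1) - y * (1 - x) * (v + 1)) * Polynomial.X
    + Polynomial.C (x * (1 - y) * u - y * (1 - x) * v) with hP
  have hne : P ≠ 0 := by
    intro h
    have := Polynomial.natDegree_quadratic (sub_ne_zero.2 hxy)
      (b := -(x * (1 - y)) * (u + 1) - y * (1 - x) * (v + 1))
      (c := x * (1 - y) * u - y * (1 - x) * v)
    rw [← hP, h] at this
    simp at this
  refine (Polynomial.finite_setOfPred_isRoot hne).subset ?_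
  intro c hc
  have hc' : x * (1 - y) * ((u - c) * (1 - c)) = y * (1 - x) * ((v + c) * (1 + c)) := hc
  show P.eval c = 0
  rw [hP]
  simp only [Polynomial.eval_add, Polynomial.eval_mul, Polynomial.eval_C, Polynomial.eval_pow,
    Polynomial.eval_X]
  linarith

/-- Shocks at which, for some `λ`, two of the four cutoffs may coincide or both cutoffs at `c` may
sit at the endpoints of the signal interval. -/
def excShocks (u v slo shi : ℝ) : Set ℝ :=
  {0, (u - v) / (2 + u + v), (u - v) / (1 + u), (u - v) / (1 + v)} ∪
  ({c : ℝ | slo * (1 - shi) * ((u - c) * (1 - c)) = shi * (1 - slo) * ((v + c) * (1 + c))} ∪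
   {c : ℝ | shi * (1 - slo) * ((u - c) * (1 - c)) = slo * (1 - shi) * ((v + c) * (1 + c))})

lemma finite_excShocks (u v : ℝ) {slo shi : ℝ} (hss : slo < shi) :
    (excShocks u v slo shi).Finite :=
  (by simp : ({0, (u - v) / (2 + u + v), (u - v) / (1 + u), (u - v) / (1 + v)} : Set ℝ).Finite).union
    ((finite_corner u v hss.ne).union (finite_corner u v hss.ne'))

lemma corner_eq {u v lam c x y : ℝ} (hlam : 0 < lam) (h1 : -1 < c) (h2 : c < u) (h3 : -v < c)
    (h4 : c < 1) (hx : mcut u lam c = x) (hy : mmcut v lam c = y) :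
    x * (1 - y) * ((u - c) * (1 - c)) = y * (1 - x) * ((v + c) * (1 + c)) := by
  have a := mcut_eq_odds hlam h1 h2 hx
  rw [mmcut_eq] at hy
  have b := mcut_eq_odds hlam (by linarith) (by linarith) hy
  -- eliminate `λ` between the two odds equations
  linear_combination (-(1 - y) * (1 - c)) * a + (1 - x) * (1 + c) * b

lemma mem_Ioo_or_of_ne {slo shi x y : ℝ} (hx : x ∈ Icc slo shi) (hy : y ∈ Icc slo shi)
    (hne : x ≠ y) (h1 : ¬ (x = slo ∧ y = shi)) (h2 : ¬ (x = shi ∧ y = slo)) :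
    x ∈ Ioo slo shi ∨ y ∈ Ioo slo shi := by
  by_contra hcon
  rw [not_or] at hcon
  have key : ∀ z ∈ Icc slo shi, z ∉ Ioo slo shi → z = slo ∨ z = shi := by
    intro z hz hz'
    by_contra h
    rw [not_or] at h
    exact hz' ⟨lt_of_le_of_ne hz.1 (Ne.symm h.1), lt_of_le_of_ne hz.2 h.2⟩
  rcases key x hx hcon.1 with hx' | hx' <;> rcases key y hy hcon.2 with hy' | hy'
  · exact hne (hx'.trans hy'.symm)
  · exact h1 ⟨hx', hy'⟩
  · exact h2 ⟨hx', hy'⟩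
  · exact hne (hx'.trans hy'.symm)

lemma mcut_zero_lt_iff {u lam x : ℝ} (hu : 0 < u) (hlam : 0 < lam) :
    (x < mcut u lam 0 ↔ x * u < lam * (1 - x)) ∧ (mcut u lam 0 < x ↔ lam * (1 - x) < x * u) := by
  have hD : 0 < lam * (1 + 0) + (u - 0) := by linarith
  unfold mcut
  rw [lt_div_iff₀ hD, div_lt_iff₀ hD]
  constructor <;> constructor <;> intro h <;> linarith

/-- Since `E₀` is nonempty and both cutoffs increase in `λ`, the cutoffs at `c = 0` never sit at
opposite endpoints. -/
lemma not_corner_zero {u v lam x y : ℝ} (hu : 0 < u) (hv : 0 < v) (hlam : 0 < lam)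
    (hx1 : x < 1) (hy1 : y < 1) {l : ℝ} (hl : 0 < l)
    (hlx : x < mcut u l 0 ∧ mmcut v l 0 < y ∨ mcut u l 0 < x ∧ y < mmcut v l 0)
    (hx : mcut u lam 0 = x) (hy : mmcut v lam 0 = y) : False := by
  have a := mcut_eq_odds hlam (by norm_num) hu hx
  rw [mmcut_eq, neg_zero] at hy
  have b := mcut_eq_odds hlam (by norm_num) hv hy
  rw [mmcut_eq, neg_zero] at hlx
  rw [(mcut_zero_lt_iff hu hl).1, (mcut_zero_lt_iff hu hl).2, (mcut_zero_lt_iff hv hl).1,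
    (mcut_zero_lt_iff hv hl).2] at hlx
  rcases hlx with ⟨h1, h2⟩ | ⟨h1, h2⟩
  · have k1 : lam < l := lt_of_mul_lt_mul_right (by linarith) (sub_pos.2 hx1).le
    have k2 : l < lam := lt_of_mul_lt_mul_right (by linarith) (sub_pos.2 hy1).le
    linarith
  · have k1 : l < lam := lt_of_mul_lt_mul_right (by linarith) (sub_pos.2 hx1).le
    have k2 : lam < l := lt_of_mul_lt_mul_right (by linarith) (sub_pos.2 hy1).le
    linarith

/-- Away from exceptional shocks every admissible pair has a neighbourhood in which the local
perturbation argument applies. -/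
lemma exists_local {p u v slo shi lo : ℝ} (hp : p ∈ Ioo (0:ℝ) 1) (hu : 0 < u) (hv : 0 < v)
    (huv : u ≠ v) (hslo : 0 < slo) (hss : slo < shi) (hshi : shi < 1) (hlo : 0 < lo)
    (hE0 : (Econf u v slo shi 0).Nonempty) {Q : Set (ℝ × ℝ)}
    (hQ : IsCompact Q) (hQA : Q ⊆ AdmPairs u v slo shi lo)
    {q : ℝ × ℝ} (hq : q ∈ Q) (hqX : q.2 ∉ excShocks u v slo shi) :
    ∃ t ∈ nhdsWithin q Q, DenseRobust p u v slo shi t := by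
  obtain ⟨g1, ⟨g2, g3⟩, ⟨g4, g5⟩, hm0, hmm0, hm, hmm⟩ := hQA hq
  have hlam : 0 < q.1 := hlo.trans_le g1
  obtain ⟨l, hl, hl1, hl2⟩ := hE0
  simp only [excShocks, mem_union, mem_insert_iff, mem_singleton_iff, not_or] at hqX
  obtain ⟨⟨x1, x2, x3, x4⟩, x5, x6⟩ := hqX
  have n12 : mcut u q.1 0 ≠ mmcut v q.1 0 := fun h => by
    rw [mmcut_eq, neg_zero] at h
    have := mcut_eq_mcut hlam (by norm_num) hu (by norm_num) hv h
    exact huv (by linarith)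
  have n13 : mcut u q.1 0 ≠ mcut u q.1 q.2 := fun h => by
    have := mcut_eq_mcut hlam (by norm_num) hu g2 g3 h
    have h' : q.2 * (1 + u) = 0 := by linarith
    rcases mul_eq_zero.1 h' with h0 | h0
    · exact x1 h0
    · linarith
  have n14 : mcut u q.1 0 ≠ mmcut v q.1 q.2 := fun h => by
    rw [mmcut_eq] at h
    have := mcut_eq_mcut hlam (by norm_num) hu (by linarith) (by linarith) h
    exact x3 (by rw [eq_div_iff (by positivity)]; linarith)
  have n23 : mmcut v q.1 0 ≠ mcut u q.1 q.2 := fun h => by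
    rw [mmcut_eq, neg_zero] at h
    have := mcut_eq_mcut hlam (by norm_num) hv g2 g3 h
    exact x4 (by rw [eq_div_iff (by positivity)]; linarith)
  have n24 : mmcut v q.1 0 ≠ mmcut v q.1 q.2 := fun h => by
    rw [mmcut_eq, neg_zero, mmcut_eq] at h
    have := mcut_eq_mcut hlam (by norm_num) hv (by linarith) (by linarith) h
    have h' : q.2 * (1 + v) = 0 := by linarith
    rcases mul_eq_zero.1 h' with h0 | h0
    · exact x1 h0
    · linarith
  have n34 : mcut u q.1 q.2 ≠ mmcut v q.1 q.2 := fun h => by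
    rw [mmcut_eq] at h
    have := mcut_eq_mcut hlam g2 g3 (by linarith) (by linarith) h
    exact x2 (by rw [eq_div_iff (by positivity)]; linarith)
  have I0 := mem_Ioo_or_of_ne hm0 hmm0 n12
    (fun h => not_corner_zero hu hv hlam (hss.trans hshi) hshi hl
      (Or.inl ⟨hl1.1, hl2.2⟩) h.1 h.2)
    (fun h => not_corner_zero hu hv hlam hshi (hss.trans hshi) hl
      (Or.inr ⟨hl1.2, hl2.1⟩) h.1 h.2)
  have I1 := mem_Ioo_or_of_ne hm hmm n34
    (fun h => x5 (corner_eq hlam g2 g3 g4 g5 h.1 h.2))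
    (fun h => x6 (corner_eq hlam g2 g3 g4 g5 h.1 h.2))
  have C1 := mcut_zero_continuousAt hu hlam
  have C2 := mmcut_zero_continuousAt hv hlam
  have C3 := mcut_continuousAt hlam g2 g3
  have C4 := mmcut_continuousAt hlam g4 g5
  obtain ⟨ψ₁, κ₁, k₁, c₁, i₁, j₁, ev₁⟩ := exists_shift hp C1 C2 C3 C4 n12 n13 n14 n23 n24 I0
  obtain ⟨ψ₂, κ₂, k₂, c₂, i₂, j₂, ev₂⟩ :=
    exists_shift hp C3 C4 C1 C2 n34 n13.symm n23.symm n14.symm n24.symm I1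
  obtain ⟨r, hr, hball⟩ := Metric.nhds_basis_closedBall.mem_iff.1 (ev₁.and ev₂)
  refine ⟨Q ∩ Metric.closedBall q r, inter_mem_nhdsWithin _ (Metric.closedBall_mem_nhds q hr), ?_⟩
  exact local_dense hp hu hv hslo hss hshi hlo (hQ.inter_right Metric.isClosed_closedBall)
    (inter_subset_left.trans hQA) c₁ c₂ i₁ i₂ j₁ j₂ k₁ k₂
    (fun z hz => (hball hz.2).1.1) (fun z hz => (hball hz.2).1.2)
    (fun z hz => (hball hz.2).2.1) (fun z hz => (hball hz.2).2.2)

/-- For strongly bounded signals, F_n is nowhere dense in F^∞. -/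
theorem Fn_nowhere_dense
    (p u v slo shi e0 : ℝ) (n : ℕ)
    (hp : p ∈ Ioo (0:ℝ) 1) (hu : 0 < u) (hv : 0 < v) (huv : u ≠ v)
    (hslo : 0 < slo) (hss : slo < shi) (hshi : shi < 1)
    (hE0 : (Econf u v slo shi 0).Nonempty)
    (he0 : 0 < e0) (hC : (Ceps u v slo shi e0).Nonempty)
    (hn : 1 ≤ n) :
    NowhereDenseIn slo shi (Fn p u v slo shi e0 n) := by
  set η : ℝ≥0∞ := 1 / n with hηdef
  have hη : 0 < η := by
    rw [hηdef, one_div]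
    exact ENNReal.inv_pos.2 (ENNReal.natCast_ne_top n)
  have hη2 : 0 < η / 2 := ENNReal.half_pos hη.ne'
  obtain ⟨V, hXV, hVo, hVlt⟩ := Set.exists_isOpen_lt_of_lt (excShocks u v slo shi) (η / 2)
    (((finite_excShocks u v hss).measure_zero volume).trans_lt hη2)
  -- `λ ∈ E₀` forces `slo * u ≤ λ ≤ u / (1 - shi)`, which bounds the relevant pairs
  set lo : ℝ := slo * u with hlodef
  have hlo : 0 < lo := mul_pos hslo hu
  set K : Set (ℝ × ℝ) := Icc lo (u / (1 - shi)) ×ˢ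
    Icc (max (-1 + e0) (-v + e0)) (min (u - e0) (1 - e0)) with hK
  have hKb : ∀ q ∈ K, lo ≤ q.1 ∧ (-1 < q.2 ∧ q.2 < u) ∧ (-v < q.2 ∧ q.2 < 1) := by
    rintro q ⟨h1, h2⟩
    have a := max_le_iff.1 h2.1
    have b := le_min_iff.1 h2.2
    exact ⟨h1.1, ⟨by linarith, by linarith⟩, by linarith, by linarith⟩
  set Fm : ℝ × ℝ → ℝ × ℝ × ℝ × ℝ := fun q =>
    (mcut u q.1 0, mmcut v q.1 0, mcut u q.1 q.2, mmcut v q.1 q.2) with hFm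
  have hFmc : ContinuousOn Fm K := by
    intro q hq
    obtain ⟨h1, ⟨h2, h3⟩, h4, h5⟩ := hKb q hq
    have hl : 0 < q.1 := hlo.trans_le h1
    exact ((mcut_zero_continuousAt hu hl).prodMk ((mmcut_zero_continuousAt hv hl).prodMk
      ((mcut_continuousAt hl h2 h3).prodMk (mmcut_continuousAt hl h4 h5)))).continuousWithinAt
  have hKc : IsCompact K := isCompact_Icc.prod isCompact_Icc
  set I := Icc slo shi with hI
  set P : Set (ℝ × ℝ) := (K ∩ Fm ⁻¹' (I ×ˢ I ×ˢ I ×ˢ I)) ∩ {q | q.2 ∈ Vᶜ} with hPdef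
  have hPc : IsCompact P := by
    refine IsCompact.inter_right ?_ (hVo.isClosed_compl.preimage continuous_snd)
    refine hKc.of_isClosed_subset ?_ inter_subset_left
    refine hFmc.preimage_isClosed_of_isClosed hKc.isClosed ?_
    exact isClosed_Icc.prod (isClosed_Icc.prod (isClosed_Icc.prod isClosed_Icc))
  have hPA : P ⊆ AdmPairs u v slo shi lo := by
    rintro q ⟨⟨hq, h1, h2, h3, h4⟩, -⟩
    obtain ⟨k1, k2, k3⟩ := hKb q hq
    exact ⟨k1, k2, k3, h1, h2, h3, h4⟩
  have hDR : DenseRobust p u v slo shi P := by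
    refine hPc.induction_on (p := fun Q => DenseRobust p u v slo shi Q) ?_
      (fun s t hst ht => ht.mono hst) (fun s t hs ht => hs.union hss ht)
      (fun q hq => exists_local hp hu hv huv hslo hss hshi hlo hE0 hPc hPA hq
        (fun h => hq.2 (hXV h)))
    intro f hf ε hε η' hη'
    refine ⟨f, hf, ?_, 1, one_pos, fun h _ _ => ?_⟩
    · refine (supDist_le hss (B := 0) fun s _ => ?_).trans_lt hε
      simp
    · simpa [Zset] using hη'
  intro f hf ε hε
  obtain ⟨g, hg, hd, δ, hδ, hh⟩ := hDR f hf ε hε (η / 2) hη2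
  refine ⟨g, hg, hd, δ, hδ, fun h hhn hlt => ?_⟩
  have hvol := hh h hhn.1 hlt
  have hsub : statSet p u v slo shi e0 h ⊆ V ∪ Zset p u v slo shi h P := by
    rintro c ⟨⟨⟨-, b1⟩, b2⟩, lam, ⟨⟨l0, l1, l2⟩, -, l3, l4⟩, z0, zc⟩
    by_cases hcV : c ∈ V
    · exact Or.inl hcV
    · have o1 := (mcut_zero_lt_iff hu l0).1.1 l1.1
      have o2 := (mcut_zero_lt_iff hu l0).2.1 l1.2
      refine Or.inr ⟨lam, ⟨⟨⟨⟨?_, ?_⟩, ?_, ?_⟩, ?_, ?_, ?_, ?_⟩, hcV⟩, z0, zc⟩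
      · have : lam * slo > 0 := mul_pos l0 hslo
        show slo * u ≤ lam
        linarith
      · show lam ≤ u / (1 - shi)
        rw [le_div_iff₀ (by linarith)]
        have : shi * u ≤ 1 * u := mul_le_mul_of_nonneg_right hshi.le hu.le
        linarith
      · exact max_le b1.1.le b2.1.le
      · exact le_min b1.2.le b2.2.le
      · exact Ioo_subset_Icc_self l1
      · exact Ioo_subset_Icc_self l2
      · exact Ioo_subset_Icc_self l3
      · exact Ioo_subset_Icc_self l4
  have hcontra : volume (statSet p u v slo shi e0 h) < η :=
    calc volume (statSet p u v slo shi e0 h) ≤ _ := measure_mono hsub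
      _ ≤ _ := measure_union_le _ _
      _ < η / 2 + η / 2 := ENNReal.add_lt_add hVlt hvol
      _ = η := ENNReal.add_halves η
  exact absurd hhn.2 (not_le.2 hcontra)
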